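/- Let R be a commutative semiring. Every finitely presented flat R-module is projective. Consequently, for finitely presented modules over a commutative semiring, flatness is equivalent to projectivity. -/

import Mathlib

/-!
Let `M` be the coequalizer of `p, q : R^m ⇉ R^n` with quotient map `f`. The dual of `M` is the
equalizer `E` of the transposes `pᵗ, qᵗ : R^n ⇉ R^m`, and `End M` is the equalizer of
`M ⊗ pᵗ, M ⊗ qᵗ : M^n ⇉ M^m`. Flatness therefore identifies `M ⊗ E` with `End M`, so that the
identity of `M` has the form `x ↦ ∑ h_i(x) m_i` with `m_i ∈ M` and `h_i ∈ Hom(M, R)`: this is a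
finite dual basis, and `M` is a retract of a finite free module
(`projective_of_isSemiflat`).

Conversely, tensoring with a free module is a direct sum of copies, which commutes with equalizers
(`exists_lTensor_subtype_of_finsupp`), and this passes to retracts
(`isSemiflat_of_projective`).
-/

/-!
Over a commutative semiring, every finitely presented flat module is projective;
consequently flatness and projectivity agree for finitely presented modules.
-/

universe u

open TensorProduct

/-- `M` is flat over the commutative semiring `R`: tensoring with `M` preserves
equalizers (hence all finite limits). -/
def IsSemiflat (R : Type u) [CommSemiring R] (M : Type u) [AddCommMonoid M] [Module R M] : Prop :=
  ∀ (N P : Type u) [AddCommMonoid N] [AddCommMonoid P] [Module R N] [Module R P]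
    (f g : N →ₗ[R] P),
    Function.Injective (LinearMap.lTensor M (LinearMap.eqLocus f g).subtype) ∧
    LinearMap.range (LinearMap.lTensor M (LinearMap.eqLocus f g).subtype) =
      LinearMap.eqLocus (LinearMap.lTensor M f) (LinearMap.lTensor M g)

/-- `f : B → M` is a coequalizer of the pair `p q : A → B` in the category of
`R`-modules (stated via the universal property). -/
def IsCoequalizerPair (R : Type u) [CommSemiring R] {A B M : Type u}
    [AddCommMonoid A] [AddCommMonoid B] [AddCommMonoid M]
    [Module R A] [Module R B] [Module R M]
    (p q : A →ₗ[R] B) (f : B →ₗ[R] M) : Prop :=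
  f.comp p = f.comp q ∧
  ∀ (Q : Type u) [AddCommMonoid Q] [Module R Q] (g : B →ₗ[R] Q),
    g.comp p = g.comp q → ∃! h : M →ₗ[R] Q, h.comp f = g

/-- An `R`-module is finitely presented if it is a coequalizer of a pair of maps
between finitely generated free modules. -/
def FinitelyPresentedMod (R : Type u) [CommSemiring R] (M : Type u)
    [AddCommMonoid M] [Module R M] : Prop :=
  ∃ (m n : ℕ) (p q : (Fin m → R) →ₗ[R] (Fin n → R)) (f : (Fin n → R) →ₗ[R] M),
    IsCoequalizerPair R p q f

/-- Tensoring with the free module `ι →₀ R` preserves equalizers: an element of `(ι →₀ R) ⊗ N`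
lies in an equalizer iff each of its coordinates does. -/
lemma exists_lTensor_subtype_of_finsupp {R ι N P : Type*} [CommSemiring R]
    [AddCommMonoid N] [AddCommMonoid P] [Module R N] [Module R P] (f g : N →ₗ[R] P)
    (x : (ι →₀ R) ⊗[R] N)
    (hx : LinearMap.lTensor (ι →₀ R) f x = LinearMap.lTensor (ι →₀ R) g x) :
    ∃ y, LinearMap.lTensor (ι →₀ R) (LinearMap.eqLocus f g).subtype y = x := by
  classical
  have nat (k : N →ₗ[R] P) (i : ι) (x : (ι →₀ R) ⊗[R] N) :
      finsuppScalarLeft R P ι (LinearMap.lTensor _ k x) i = k (finsuppScalarLeft R N ι x i) := by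
    induction x with
    | zero => simp
    | tmul a n => simp [finsuppScalarLeft_apply_tmul_apply]
    | add x y hx hy => simp [hx, hy]
  have hmem (i : ι) : finsuppScalarLeft R N ι x i ∈ LinearMap.eqLocus f g := by
    rw [LinearMap.mem_eqLocus, ← nat, ← nat, hx]
  refine ⟨∑ i ∈ (finsuppScalarLeft R N ι x).support, Finsupp.single i 1 ⊗ₜ ⟨_, hmem i⟩, ?_⟩
  apply (finsuppScalarLeft R N ι).injective
  simp only [map_sum, LinearMap.lTensor_tmul, Submodule.subtype_apply]
  conv_rhs => rw [← Finsupp.sum_single (finsuppScalarLeft R N ι x)]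
  rw [Finsupp.sum]
  refine Finset.sum_congr rfl fun i _ => ?_
  rw [← finsuppScalarLeft_symm_apply_single, LinearEquiv.apply_symm_apply]

lemma isSemiflat_of_projective (R : Type u) [CommSemiring R]
    (M : Type u) [AddCommMonoid M] [Module R M] (h : Module.Projective R M) :
    IsSemiflat R M := by
  obtain ⟨s, hs⟩ := Module.projective_def'.1 h
  intro N P _ _ _ _ f g
  refine ⟨Module.Flat.lTensor_preserves_injective_linearMap _ Subtype.val_injective,
    le_antisymm ?_ ?_⟩
  · rintro _ ⟨y, rfl⟩
    rw [LinearMap.mem_eqLocus, ← LinearMap.comp_apply, ← LinearMap.comp_apply,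
      ← LinearMap.lTensor_comp, ← LinearMap.lTensor_comp]
    congr 2
    ext z
    exact z.2
  · intro x hx
    rw [LinearMap.mem_eqLocus] at hx
    -- Push `x` into the free module along the section `s`, lift it there, and retract the lift.
    have key (k : N →ₗ[R] P) : LinearMap.lTensor (M →₀ R) k (LinearMap.rTensor N s x) =
        LinearMap.rTensor P s (LinearMap.lTensor M k x) := by
      rw [← LinearMap.comp_apply, ← LinearMap.comp_apply, LinearMap.lTensor_comp_rTensor,
        LinearMap.rTensor_comp_lTensor]
    obtain ⟨y, hy⟩ := exists_lTensor_subtype_of_finsupp f g (LinearMap.rTensor N s x)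
      (by rw [key, key, hx])
    refine ⟨LinearMap.rTensor _ (Finsupp.linearCombination R id) y, ?_⟩
    rw [← LinearMap.comp_apply, LinearMap.lTensor_comp_rTensor, ← LinearMap.rTensor_comp_lTensor,
      LinearMap.comp_apply, hy, ← LinearMap.comp_apply, ← LinearMap.rTensor_comp, hs,
      LinearMap.rTensor_id, LinearMap.id_apply]

/-- Flatness applied to the pair `pᵗ, qᵗ` produces a finite dual basis. -/
lemma projective_of_isSemiflat (R : Type u) [CommSemiring R]
    (M : Type u) [AddCommMonoid M] [Module R M] (hfp : FinitelyPresentedMod R M)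
    (hM : IsSemiflat R M) : Module.Projective R M := by
  obtain ⟨m, n, p, q, f, hpq, huniv⟩ := hfp
  -- The functional `v ⬝ᵥ ·` on `R^n`, and the transpose of a map `R^m → R^n`.
  let φ (v : Fin n → R) : (Fin n → R) →ₗ[R] R := Fintype.linearCombination R v
  have hφ (v w) : φ v w = ∑ j, w j * v j := by
    simp [φ, Fintype.linearCombination_apply]
  let tr (k : (Fin m → R) →ₗ[R] (Fin n → R)) : (Fin n → R) →ₗ[R] (Fin m → R) :=
    (LinearMap.toMatrix' k).transpose.mulVecLin
  have htr (k v i) : tr k v i = φ v (k (Pi.single i 1)) := by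
    simp [tr, hφ, Matrix.vecMul_eq_sum, LinearMap.toMatrix'_apply, mul_comm]
  -- The element of `M ⊗ R^n ≃ M^n` corresponding to the identity of `M`.
  let t : M ⊗[R] (Fin n → R) := ∑ j, f (Pi.single j 1) ⊗ₜ Pi.single j 1
  have ht (k) : piScalarRight R R M (Fin m) (LinearMap.lTensor M (tr k) t) =
      fun i => f (k (Pi.single i 1)) := by
    ext i
    conv_rhs => rw [pi_eq_sum_univ' (k (Pi.single i 1))]
    simp [t, htr, hφ, Pi.single_apply, Finset.sum_apply]
  have htmem : t ∈ LinearMap.eqLocus (LinearMap.lTensor M (tr p)) (LinearMap.lTensor M (tr q)) := by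
    rw [LinearMap.mem_eqLocus]
    apply (piScalarRight R R M (Fin m)).injective
    rw [ht, ht]
    ext i
    exact LinearMap.congr_fun hpq _
  rw [← (hM _ _ (tr p) (tr q)).2] at htmem
  obtain ⟨s, hs⟩ := htmem
  obtain ⟨S, rfl⟩ := TensorProduct.exists_finset s
  have hdesc (e : LinearMap.eqLocus (tr p) (tr q)) : ∃ h : M →ₗ[R] R, h.comp f = φ e := by
    refine (huniv R (φ e) ?_).exists
    refine LinearMap.pi_ext' fun i => LinearMap.ext_ring ?_
    simpa [htr] using congr_fun e.2 i
  choose h hh using hdesc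
  let i : M →ₗ[R] (S → R) := LinearMap.pi fun a => h a.1.2
  let r : (S → R) →ₗ[R] M := Fintype.linearCombination R fun a => a.1.1
  refine Module.Projective.of_split i r ?_
  -- Both sides factor `f` through `f`, so uniqueness in the universal property applies.
  refine (huniv M f hpq).unique ?_ (LinearMap.id_comp f)
  refine LinearMap.pi_ext' fun j => LinearMap.ext_ring ?_
  have hj := congr_fun (congr_arg (piScalarRight R R M (Fin n)) hs) j
  have hhj (e) : h e (f (Pi.single j 1)) = e.1 j := by
    rw [← LinearMap.comp_apply, hh, hφ]
    simp [Pi.single_apply]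
  simp only [map_sum, LinearMap.lTensor_tmul, Submodule.subtype_apply, piScalarRight_apply,
    piScalarRightHom_tmul, Finset.sum_apply, t] at hj
  simp only [i, r, LinearMap.comp_apply, Fintype.linearCombination_apply, LinearMap.pi_apply,
    LinearMap.single_apply, hhj]
  rw [Finset.sum_coe_sort S (fun a => a.2.1 j • a.1), hj]
  simp [Pi.single_apply]

/-- Finitely presented flat modules over a commutative semiring are projective;
consequently, for finitely presented modules flatness is equivalent to
projectivity. -/
theorem projective_of_finitelyPresented_flat (R : Type u) [CommSemiring R]
    (M : Type u) [AddCommMonoid M] [Module R M] (hfp : FinitelyPresentedMod R M) :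
    (IsSemiflat R M → Module.Projective R M) ∧
    (IsSemiflat R M ↔ Module.Projective R M) := by
  have hflat := projective_of_isSemiflat R M hfp
  exact ⟨hflat, hflat, isSemiflat_of_projective R M⟩
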